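/- arXiv:1411.7666 — 2 statements merged into one kernel-verified Lean document; each statement's English description precedes it below -/
import Mathlib

section
/- If S is a nontrivial subspace of V(Q_{n,m}), then every coloring of the induced subgraph Q_{n,m}|_S contains a code of dimension at most ⌈(dim(S^⊥)+1)/m⌉. -/
/-!
The squared lengths `‖P_S w_t‖²` add up to `dim S` over all `t` and are at most `1` each, so one of
the first `dim S^⊥ + 1` vectors, say `w_t = w_{i,j}`, has `‖P_S w_t‖² ≥ 1 / n`. Consequently
`tr (P_S A_i) = ∑ k, λ_{i,k} ‖P_S w_{i,k}‖² ≥ λ_{i,j} / n ≥ dim S * λ_{i,j} / n²`. The same trace is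
the sum of `ε_C(A_i) dim C` over the codes `C` of the coloring, so some code has
`ε_C(A_i) ≥ λ_{i,j} / n²`. By Cauchy interlacing, `dim C` is at most the number of eigenvalues of
`A_i` that are at least `λ_{i,j} / n²`, and by the tropical gap this number is at most
`j = ⌈t / m⌉ ≤ ⌈(dim S^⊥ + 1) / m⌉`.
-/

open Matrix

/-- The tropical, cyclical, commutative quantum graph `Q_{n,m}`: its edge space is spanned
by the identity together with `m` commuting positive self-adjoint operators `A i` with a
common orthonormal eigenbasis; for each `i`, `w i` lists the eigenvectors of `A i` in
decreasing order of eigenvalue `lam i`, the eigenvalues are tropically separated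
(`0 < λ_{i,j+1} < λ_{i,j}/n²`), consecutive labelings are cyclic shifts by
`⌊n/m⌋ (+1 for the first n mod m indices)`, and `ws` is the single-index relabeling in
which `w_{(k−1)m+1},…,w_{km}` each equal `w_{i,k}` for some `i`. -/
structure Qnm (n m : ℕ) where
  A : Fin m → Matrix (Fin n) (Fin n) ℂ
  herm : ∀ i, (A i).IsHermitian
  comm : ∀ i j, A i * A j = A j * A i
  lam : Fin m → Fin n → ℝ
  w : Fin m → Fin n → (Fin n → ℂ)
  ws : Fin n → (Fin n → ℂ)
  ortho : ∀ i j k, star (w i j) ⬝ᵥ w i k = if j = k then 1 else 0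
  span : ∀ i, Submodule.span ℂ (Set.range (w i)) = ⊤
  eig : ∀ i j, (A i).mulVec (w i j) = (lam i j : ℂ) • w i j
  pos : ∀ i j, 0 < lam i j
  tropical : ∀ i (j : Fin n) (h : (j : ℕ) + 1 < n),
    lam i ⟨(j : ℕ) + 1, h⟩ < lam i j / (n : ℝ) ^ 2
  cyclical : ∀ (i : Fin m) (hi : (i : ℕ) + 1 < m) (j : Fin n),
    w ⟨(i : ℕ) + 1, hi⟩ j =
      w i ⟨((j : ℕ) + n / m + if (i : ℕ) + 1 ≤ n % m then 1 else 0) % n,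
        Nat.mod_lt _ (Nat.lt_of_le_of_lt (Nat.zero_le _) j.isLt)⟩
  relabel : ∀ t : Fin n, ∃ i : Fin m,
    ws t = w i ⟨(t : ℕ) / m, Nat.lt_of_le_of_lt (Nat.div_le_self _ _) t.isLt⟩
  wsortho : ∀ s t, star (ws s) ⬝ᵥ ws t = if s = t then 1 else 0
  wsspan : Submodule.span ℂ (Set.range ws) = ⊤

/-- A code of `Q_{n,m}`: an (orthogonal projection onto a) subspace `C` with
`P_C A P_C = ε_C(A) P_C` for every edge operator `A` (equivalently, for the identity
and each basis operator `A i`). -/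
def Qnm.IsCode {n m : ℕ} (Q : Qnm n m) (P : Matrix (Fin n) (Fin n) ℂ) : Prop :=
  P.IsHermitian ∧ P * P = P ∧ ∀ i, ∃ ε : ℝ, P * Q.A i * P = (ε : ℂ) • P

section Idempotent

variable {K ι κ : Type*} [Field K] [Fintype ι]

theorem trace_eq_rank_of_isIdempotentElem {P : Matrix ι ι K} (hP : IsIdempotentElem P) :
    P.trace = (P.rank : K) := by
  classical
  have hidem : IsIdempotentElem (Matrix.toLin' P) := by
    rw [IsIdempotentElem, Module.End.mul_eq_comp, ← Matrix.toLin'_mul, hP]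
  rw [← Matrix.trace_toLin'_eq]
  exact (LinearMap.IsIdempotentElem.isProj_range _ hidem).trace

theorem rank_eq_sum_rank_of_isIdempotentElem [CharZero K] {C : Finset (Matrix ι ι K)}
    {S : Matrix ι ι K} (hC : ∀ P ∈ C, IsIdempotentElem P) (hsum : ∑ P ∈ C, P = S)
    (hS : IsIdempotentElem S) : S.rank = ∑ P ∈ C, P.rank := by
  have htrace : (S.rank : K) = ∑ P ∈ C, (P.rank : K) := by
    rw [← trace_eq_rank_of_isIdempotentElem hS, ← hsum, Matrix.trace_sum]
    exact Finset.sum_congr rfl fun P hP ↦ trace_eq_rank_of_isIdempotentElem (hC P hP)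
  exact_mod_cast htrace

theorem trace_mul_eq_of_compression {P A : Matrix ι ι K} {ε : K} (hP : IsIdempotentElem P)
    (hε : P * A * P = ε • P) : (P * A).trace = ε * P.rank := by
  calc (P * A).trace = (P * A * P).trace := by rw [Matrix.trace_mul_cycle, hP]
    _ = ε * P.rank := by
      rw [hε, Matrix.trace_smul, trace_eq_rank_of_isIdempotentElem hP, smul_eq_mul]

theorem exists_mulVec_eq_self_and_dotProduct_eq_zero [Fintype κ] {P : Matrix ι ι K}
    (hP : IsIdempotentElem P) (f : κ → ι → K) (hκ : Fintype.card κ < P.rank) :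
    ∃ v ≠ 0, P *ᵥ v = v ∧ ∀ k, f k ⬝ᵥ v = 0 := by
  let g : LinearMap.range P.mulVecLin →ₗ[K] (κ → K) :=
    (Matrix.of f).mulVecLin ∘ₗ (LinearMap.range P.mulVecLin).subtype
  have hker : LinearMap.ker g ≠ ⊥ := LinearMap.ker_ne_bot_of_finrank_lt <| by
    rwa [Module.finrank_fintype_fun_eq_card]
  obtain ⟨⟨_, u, rfl⟩, hgu, hu⟩ := (Submodule.ne_bot_iff _).mp hker
  refine ⟨P.mulVecLin u, fun h ↦ hu (Subtype.ext h), ?_, congrFun hgu⟩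
  rw [Matrix.mulVecLin_apply, Matrix.mulVec_mulVec, hP]

end Idempotent

section ExpectationValue

open scoped MatrixOrder ComplexOrder

variable {𝕜 ι : Type*} [RCLike 𝕜] [Fintype ι]

/-- The real part of `⟨v, A v⟩`: the expectation value of the observable `A` in the state `v`.
For an orthogonal projection `A` it is the squared length of the projection of `v`. -/
def expectationValue (A : Matrix ι ι 𝕜) (v : ι → 𝕜) : ℝ :=
  RCLike.re (star v ⬝ᵥ A *ᵥ v)

theorem expectationValue_sub (A B : Matrix ι ι 𝕜) (v : ι → 𝕜) :
    expectationValue (A - B) v = expectationValue A v - expectationValue B v := by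
  simp only [expectationValue, Matrix.sub_mulVec, dotProduct_sub, map_sub]

theorem expectationValue_one_pos [DecidableEq ι] {v : ι → 𝕜} (hv : v ≠ 0) :
    0 < expectationValue 1 v := by
  rw [expectationValue, Matrix.one_mulVec]
  exact (RCLike.pos_iff.mp (Matrix.dotProduct_star_self_pos_iff.mpr hv)).1

theorem expectationValue_of_compression [DecidableEq ι] {P A : Matrix ι ι 𝕜} {ε : 𝕜} {v : ι → 𝕜}
    (hP : P.IsHermitian) (hv : P *ᵥ v = v) (hε : P * A * P = ε • P) :
    expectationValue A v = RCLike.re ε * expectationValue 1 v := by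
  have hvP : star v ᵥ* P = star v := by
    rw [← hP.eq, ← Matrix.star_mulVec, hv]
  have hcompress : star v ⬝ᵥ A *ᵥ v = ε * (star v ⬝ᵥ v) := by
    calc star v ⬝ᵥ A *ᵥ v = star v ⬝ᵥ (P * A * P) *ᵥ v := by
          rw [← Matrix.mulVec_mulVec, hv, ← Matrix.mulVec_mulVec, Matrix.dotProduct_mulVec _ P, hvP]
      _ = ε * (star v ⬝ᵥ v) := by
          rw [hε, Matrix.smul_mulVec, hv, dotProduct_smul, smul_eq_mul]
  have him : RCLike.im (star v ⬝ᵥ v) = 0 :=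
    (RCLike.nonneg_iff.mp (dotProduct_star_self_nonneg v)).2
  rw [expectationValue, expectationValue, hcompress, Matrix.one_mulVec, RCLike.mul_re, him,
    mul_zero, sub_zero]

theorem posSemidef_of_isStarProjection {P : Matrix ι ι 𝕜} (hP : IsStarProjection P) :
    P.PosSemidef := by
  classical exact hP.nonneg.posSemidef

theorem rank_pos_of_isStarProjection {P : Matrix ι ι 𝕜} (hP : IsStarProjection P) (hne : P ≠ 0) :
    0 < P.rank := by
  refine Nat.pos_of_ne_zero fun hrank ↦ hne ?_
  rw [← (posSemidef_of_isStarProjection hP).trace_eq_zero_iff,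
    trace_eq_rank_of_isIdempotentElem hP.isIdempotentElem, hrank, Nat.cast_zero]

theorem expectationValue_nonneg {P : Matrix ι ι 𝕜} (hP : P.PosSemidef) (v : ι → 𝕜) :
    0 ≤ expectationValue P v :=
  hP.re_dotProduct_nonneg v

theorem expectationValue_le_one {P : Matrix ι ι 𝕜} (hP : IsStarProjection P) {v : ι → 𝕜}
    (hv : star v ⬝ᵥ v = 1) : expectationValue P v ≤ 1 := by
  classical
  have hcompl := expectationValue_nonneg (posSemidef_of_isStarProjection hP.one_sub) v
  have hone : expectationValue 1 v = 1 := by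
    rw [expectationValue, Matrix.one_mulVec, hv, RCLike.one_re]
  rw [expectationValue_sub, hone] at hcompl
  exact sub_nonneg.mp hcompl

end ExpectationValue

section Eigenbasis

open scoped ComplexOrder Finset

variable {𝕜 ι : Type*} [RCLike 𝕜] [Fintype ι] [DecidableEq ι]

/-- The vectors `e j` form an orthonormal basis of `𝕜 ^ ι`. Spanning need not be asked for, as there
are as many vectors as coordinates. -/
def IsOrthonormalBasis (e : ι → ι → 𝕜) : Prop :=
  ∀ j k, star (e j) ⬝ᵥ e k = if j = k then 1 else 0

/-- `e` is an orthonormal basis of eigenvectors of `A`, with real eigenvalues `μ`. -/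
structure IsOrthonormalEigenbasis (A : Matrix ι ι 𝕜) (μ : ι → ℝ) (e : ι → ι → 𝕜) : Prop where
  orthonormal : IsOrthonormalBasis e
  mulVec_eq : ∀ j, A *ᵥ e j = (μ j : 𝕜) • e j

variable {A S : Matrix ι ι 𝕜} {μ : ι → ℝ} {e : ι → ι → 𝕜}

theorem IsOrthonormalBasis.isOrthonormalEigenbasis_one (he : IsOrthonormalBasis e) :
    IsOrthonormalEigenbasis (1 : Matrix ι ι 𝕜) (fun _ ↦ 1) e :=
  ⟨he, fun j ↦ by simp⟩

theorem IsOrthonormalBasis.sum_vecMulVec (he : IsOrthonormalBasis e) :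
    ∑ j, Matrix.vecMulVec (e j) (star (e j)) = 1 := by
  have hleft : (Matrix.of e)ᵀᴴ * (Matrix.of e)ᵀ = 1 := by
    ext j k
    simpa [Matrix.mul_apply, Matrix.one_apply, dotProduct] using he j k
  rw [← mul_eq_one_comm.mp hleft]
  ext a b
  simp [Matrix.sum_apply, Matrix.vecMulVec_apply, Matrix.mul_apply]

namespace IsOrthonormalEigenbasis

theorem eq_sum_vecMulVec (he : IsOrthonormalEigenbasis A μ e) :
    A = ∑ j, (μ j : 𝕜) • Matrix.vecMulVec (e j) (star (e j)) := by
  calc A = A * ∑ j, Matrix.vecMulVec (e j) (star (e j)) := by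
        rw [he.orthonormal.sum_vecMulVec, mul_one]
    _ = ∑ j, (μ j : 𝕜) • Matrix.vecMulVec (e j) (star (e j)) := by
        simp only [Matrix.mul_sum, Matrix.mul_vecMulVec, he.mulVec_eq, Matrix.smul_vecMulVec]

theorem re_trace_mul (he : IsOrthonormalEigenbasis A μ e) (S : Matrix ι ι 𝕜) :
    RCLike.re (S * A).trace = ∑ j, μ j * expectationValue S (e j) := by
  rw [he.eq_sum_vecMulVec, Matrix.mul_sum, Matrix.trace_sum, map_sum]
  refine Finset.sum_congr rfl fun j _ ↦ ?_
  rw [Matrix.mul_smul, Matrix.mul_vecMulVec, Matrix.trace_smul, Matrix.trace_vecMulVec, smul_eq_mul,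
    RCLike.re_ofReal_mul, dotProduct_comm, expectationValue]

theorem expectationValue_eq_sum (he : IsOrthonormalEigenbasis A μ e) (v : ι → 𝕜) :
    expectationValue A v = ∑ j, μ j * ‖star (e j) ⬝ᵥ v‖ ^ 2 := by
  rw [expectationValue, he.eq_sum_vecMulVec, Matrix.sum_mulVec, dotProduct_sum, map_sum]
  refine Finset.sum_congr rfl fun j _ ↦ ?_
  rw [Matrix.smul_mulVec, Matrix.vecMulVec_mulVec, dotProduct_smul, op_smul_eq_smul,
    dotProduct_smul, smul_eq_mul, smul_eq_mul, RCLike.re_ofReal_mul, Matrix.star_dotProduct v,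
    RCLike.star_def, RCLike.mul_conj]
  norm_cast

theorem expectationValue_lt (he : IsOrthonormalEigenbasis A μ e) {v : ι → 𝕜} (hv : v ≠ 0) {c : ℝ}
    (hc : ∀ j, c ≤ μ j → star (e j) ⬝ᵥ v = 0) :
    expectationValue A v < c * expectationValue 1 v := by
  have hpos := expectationValue_one_pos hv
  rw [he.orthonormal.isOrthonormalEigenbasis_one.expectationValue_eq_sum] at hpos ⊢
  simp only [one_mul] at hpos ⊢
  obtain ⟨k, -, hk⟩ := Finset.exists_ne_zero_of_sum_ne_zero hpos.ne'
  have hμ : ∀ j, ‖star (e j) ⬝ᵥ v‖ ^ 2 ≠ 0 → μ j < c := fun j hj ↦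
    lt_of_not_ge fun hle ↦ hj (by rw [hc j hle, norm_zero, zero_pow two_ne_zero])
  rw [he.expectationValue_eq_sum, Finset.mul_sum]
  refine Finset.sum_lt_sum (fun j _ ↦ ?_) ⟨k, Finset.mem_univ k,
    mul_lt_mul_of_pos_right (hμ k hk) ((sq_nonneg _).lt_of_ne' hk)⟩
  rcases eq_or_ne (‖star (e j) ⬝ᵥ v‖ ^ 2) 0 with hj | hj
  · rw [hj, mul_zero, mul_zero]
  · exact mul_le_mul_of_nonneg_right (hμ j hj).le (sq_nonneg _)

/-- One half of Cauchy interlacing, for a compression that is scalar: otherwise the range of `P`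
would contain a nonzero vector orthogonal to all eigenvectors with eigenvalue at least `re ε`. -/
theorem rank_le_card_of_compression (he : IsOrthonormalEigenbasis A μ e) {P : Matrix ι ι 𝕜}
    (hP : IsStarProjection P) {ε : 𝕜} (hε : P * A * P = ε • P) :
    P.rank ≤ #{j | RCLike.re ε ≤ μ j} := by
  by_contra! hrank
  obtain ⟨v, hv, hPv, horth⟩ := exists_mulVec_eq_self_and_dotProduct_eq_zero hP.isIdempotentElem
    (fun j : {j // RCLike.re ε ≤ μ j} ↦ star (e j)) (by rwa [Fintype.card_subtype])
  exact (he.expectationValue_lt hv fun j hj ↦ horth ⟨j, hj⟩).ne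
    (expectationValue_of_compression hP.isSelfAdjoint hPv hε)

theorem mul_expectationValue_le_re_trace (he : IsOrthonormalEigenbasis A μ e) (hμ : ∀ j, 0 ≤ μ j)
    (hS : S.PosSemidef) (j : ι) :
    μ j * expectationValue S (e j) ≤ RCLike.re (S * A).trace := by
  rw [he.re_trace_mul]
  exact Finset.single_le_sum (f := fun k ↦ μ k * expectationValue S (e k))
    (fun k _ ↦ mul_nonneg (hμ k) (expectationValue_nonneg hS _)) (Finset.mem_univ j)

theorem exists_rank_le_card (he : IsOrthonormalEigenbasis A μ e) (hS : IsIdempotentElem S)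
    {C : Finset (Matrix ι ι 𝕜)} (hC : C.Nonempty) (hproj : ∀ P ∈ C, IsStarProjection P)
    (hcode : ∀ P ∈ C, ∃ ε : 𝕜, P * A * P = ε • P) (hsum : ∑ P ∈ C, P = S) {c : ℝ}
    (hc : S.rank * c ≤ RCLike.re (S * A).trace) : ∃ P ∈ C, P.rank ≤ #{j | c ≤ μ j} := by
  have hle : ∑ P ∈ C, P.rank * c ≤ ∑ P ∈ C, RCLike.re (P * A).trace := by
    rwa [← Finset.sum_mul, ← Nat.cast_sum, ← rank_eq_sum_rank_of_isIdempotentElem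
      (fun P hP ↦ (hproj P hP).isIdempotentElem) hsum hS, ← map_sum, ← Matrix.trace_sum,
      ← Finset.sum_mul, hsum]
  obtain ⟨P, hP, hPc⟩ := Finset.exists_le_of_sum_le hC hle
  obtain ⟨ε, hε⟩ := hcode P hP
  refine ⟨P, hP, ?_⟩
  rcases P.rank.eq_zero_or_pos with hrank | hrank
  · exact hrank ▸ Nat.zero_le _
  have hcε : c ≤ RCLike.re ε := by
    rw [trace_mul_eq_of_compression (hproj P hP).isIdempotentElem hε, RCLike.mul_re,
      RCLike.natCast_im, mul_zero, sub_zero, RCLike.natCast_re, mul_comm] at hPc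
    exact le_of_mul_le_mul_right hPc (by exact_mod_cast hrank)
  exact (he.rank_le_card_of_compression (hproj P hP) hε).trans
    (Finset.card_le_card (Finset.monotone_filter_right _ fun j _ hj ↦ hcε.trans hj))

end IsOrthonormalEigenbasis

theorem IsOrthonormalBasis.rank_eq_sum_expectationValue (he : IsOrthonormalBasis e)
    (hS : IsIdempotentElem S) : (S.rank : ℝ) = ∑ j, expectationValue S (e j) := by
  have htrace := he.isOrthonormalEigenbasis_one.re_trace_mul S
  simpa only [mul_one, one_mul, trace_eq_rank_of_isIdempotentElem hS, RCLike.natCast_re]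
    using htrace

theorem IsOrthonormalBasis.exists_inv_card_le_expectationValue (he : IsOrthonormalBasis e)
    (hS : IsStarProjection S) {T : Finset ι} (hT : Fintype.card ι < #T + S.rank) :
    ∃ t ∈ T, (Fintype.card ι : ℝ)⁻¹ ≤ expectationValue S (e t) := by
  have hne : T.Nonempty := Finset.card_pos.mp <| by
    have := S.rank_le_card_width
    lia
  have hcompl : ∑ j ∈ Tᶜ, expectationValue S (e j) ≤ #Tᶜ := by
    simpa using Finset.sum_le_card_nsmul Tᶜ _ 1 fun j _ ↦
      expectationValue_le_one hS ((he j j).trans (if_pos rfl))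
  have hone : 1 ≤ ∑ j ∈ T, expectationValue S (e j) := by
    have hcast : (#T + #Tᶜ : ℝ) + 1 ≤ #T + S.rank := by
      exact_mod_cast (Finset.card_add_card_compl T).symm ▸ hT
    have hsplit := Finset.sum_add_sum_compl T fun j ↦ expectationValue S (e j)
    rw [← he.rank_eq_sum_expectationValue hS.isIdempotentElem] at hsplit
    linarith
  refine Finset.exists_le_of_sum_le hne (le_trans ?_ hone)
  rw [Finset.sum_const, nsmul_eq_mul, ← div_eq_mul_inv]
  exact div_le_one_of_le₀ (by exact_mod_cast T.card_le_univ) (Nat.cast_nonneg _)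

end Eigenbasis

section InducedCode

variable {𝕜 ι κ : Type*} [RCLike 𝕜] [Fintype ι]

/-- `P` is the orthogonal projection onto a code of the subgraph induced on the range of the
orthogonal projection `S`, in the quantum graph whose edge space is spanned by the identity and the
operators `A i`. The condition `S * P = P` says that the code lies in the range of `S`. -/
structure IsInducedCode (A : κ → Matrix ι ι 𝕜) (S P : Matrix ι ι 𝕜) : Prop where
  isStarProjection : IsStarProjection P
  mul_eq : S * P = P
  exists_compression : ∀ i, ∃ ε : 𝕜, P * (S * A i * S) * P = ε • P

theorem IsInducedCode.exists_mul_mul_eq_smul {A : κ → Matrix ι ι 𝕜} {S P : Matrix ι ι 𝕜}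
    (hP : IsInducedCode A S P) (hS : S.IsHermitian) (i : κ) : ∃ ε : 𝕜, P * A i * P = ε • P := by
  have hPS : P * S = P := by
    rw [← Matrix.conjTranspose_inj, Matrix.conjTranspose_mul, hS.eq,
      show Pᴴ = P from hP.isStarProjection.isSelfAdjoint, hP.mul_eq]
  obtain ⟨ε, hε⟩ := hP.exists_compression i
  refine ⟨ε, ?_⟩
  calc P * A i * P = P * S * A i * (S * P) := by rw [hPS, hP.mul_eq]
    _ = P * (S * A i * S) * P := by simp only [Matrix.mul_assoc]
    _ = ε • P := hε

end InducedCode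

section Tropical

open scoped Finset

/-- The spectrum condition of a tropical quantum graph: the `μ j` are positive, and each is more
than `n ^ 2` times its successor. -/
structure IsTropical {n : ℕ} (μ : Fin n → ℝ) : Prop where
  pos : ∀ j, 0 < μ j
  gap : ∀ (j : Fin n) (h : (j : ℕ) + 1 < n), μ ⟨(j : ℕ) + 1, h⟩ < μ j / (n : ℝ) ^ 2

namespace IsTropical

variable {n : ℕ} {μ : Fin n → ℝ}

theorem antitone (hμ : IsTropical μ) : Antitone μ := by
  rcases n with _ | n
  · exact fun j ↦ j.elim0
  refine Fin.antitone_iff_succ_le.mpr fun j ↦ (hμ.gap j.castSucc (by simp)).le.trans ?_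
  exact div_le_self (hμ.pos _).le (one_le_pow₀ (by simp))

theorem card_div_sq_le (hμ : IsTropical μ) (j : Fin n) :
    #{k | μ j / (n : ℝ) ^ 2 ≤ μ k} ≤ (j : ℕ) + 1 := by
  rw [← Fin.card_Iic]
  refine Finset.card_le_card fun k hk ↦ Finset.mem_Iic.mpr <| le_of_not_gt fun hjk ↦ ?_
  have hnext : (j : ℕ) + 1 < n := (Nat.succ_le_of_lt hjk).trans_lt k.isLt
  have hle : μ k ≤ μ ⟨j + 1, hnext⟩ := hμ.antitone (Nat.succ_le_of_lt hjk)
  exact ((Finset.mem_filter.mp hk).2.trans hle).not_gt (hμ.gap j hnext)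

end IsTropical

theorem exists_rank_le_of_isTropical {𝕜 : Type*} [RCLike 𝕜] {n : ℕ} {A S : Matrix (Fin n) (Fin n) 𝕜}
    {μ : Fin n → ℝ} {e : Fin n → Fin n → 𝕜} (he : IsOrthonormalEigenbasis A μ e)
    (hμ : IsTropical μ) (hS : IsStarProjection S) {C : Finset (Matrix (Fin n) (Fin n) 𝕜)}
    (hC : C.Nonempty) (hproj : ∀ P ∈ C, IsStarProjection P)
    (hcode : ∀ P ∈ C, ∃ ε : 𝕜, P * A * P = ε • P) (hsum : ∑ P ∈ C, P = S) {j : Fin n}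
    (hj : (n : ℝ)⁻¹ ≤ expectationValue S (e j)) : ∃ P ∈ C, P.rank ≤ (j : ℕ) + 1 := by
  have hn : (0 : ℝ) < n := by exact_mod_cast j.pos
  have hrank : (S.rank : ℝ) ≤ n := by exact_mod_cast S.rank_le_width
  have hthreshold : S.rank * (μ j / (n : ℝ) ^ 2) ≤ RCLike.re (S * A).trace := by
    calc S.rank * (μ j / (n : ℝ) ^ 2) ≤ n * (μ j / (n : ℝ) ^ 2) :=
          mul_le_mul_of_nonneg_right hrank (div_nonneg (hμ.pos j).le (sq_nonneg _))
      _ = μ j * (n : ℝ)⁻¹ := by field_simp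
      _ ≤ μ j * expectationValue S (e j) := mul_le_mul_of_nonneg_left hj (hμ.pos j).le
      _ ≤ RCLike.re (S * A).trace := he.mul_expectationValue_le_re_trace (fun k ↦ (hμ.pos k).le)
          (posSemidef_of_isStarProjection hS) j
  obtain ⟨P, hP, hle⟩ := he.exists_rank_le_card hS.isIdempotentElem hC hproj hcode hsum hthreshold
  exact ⟨P, hP, hle.trans (hμ.card_div_sq_le j)⟩

theorem coloring_of_induced_has_small_code_general {𝕜 κ : Type*} [RCLike 𝕜] {n m : ℕ} (hm : 1 ≤ m)
    {A : κ → Matrix (Fin n) (Fin n) 𝕜} {lam : κ → Fin n → ℝ} {w : κ → Fin n → Fin n → 𝕜}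
    {ws : Fin n → Fin n → 𝕜} (hw : ∀ i, IsOrthonormalEigenbasis (A i) (lam i) (w i))
    (hlam : ∀ i, IsTropical (lam i)) (hws : IsOrthonormalBasis ws)
    (hrelabel : ∀ t : Fin n, ∃ i, ws t = w i ⟨t / m, (Nat.div_le_self _ _).trans_lt t.isLt⟩)
    {S : Matrix (Fin n) (Fin n) 𝕜} (hS : IsStarProjection S) (hne : S ≠ 0)
    {C : Finset (Matrix (Fin n) (Fin n) 𝕜)} (hcode : ∀ P ∈ C, IsInducedCode A S P)
    (hsum : ∑ P ∈ C, P = S) : ∃ P ∈ C, P.rank ≤ (n - S.rank + 1 + m - 1) / m := by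
  have hcount : Fintype.card (Fin n) < #{t : Fin n | (t : ℕ) < n - S.rank + 1} + S.rank := by
    have := rank_pos_of_isStarProjection hS hne
    have := S.rank_le_width
    rw [Fintype.card_fin, Fin.card_filter_val_lt]
    lia
  obtain ⟨t, ht, hweight⟩ := hws.exists_inv_card_le_expectationValue hS hcount
  obtain ⟨i, hi⟩ := hrelabel t
  rw [hi, Fintype.card_fin] at hweight
  have hC : C.Nonempty := Finset.nonempty_of_sum_ne_zero (hsum ▸ hne)
  obtain ⟨P, hP, hle⟩ := exists_rank_le_of_isTropical (hw i) (hlam i) hS hC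
    (fun P hP ↦ (hcode P hP).isStarProjection)
    (fun P hP ↦ (hcode P hP).exists_mul_mul_eq_smul hS.isSelfAdjoint i) hsum hweight
  refine ⟨P, hP, hle.trans ?_⟩
  rw [← Nat.add_div_right _ hm]
  have := (Finset.mem_filter.mp ht).2
  exact Nat.div_le_div_right (by lia)

end Tropical

/-- If `S` is a nontrivial subspace of `V(Q_{n,m})` (given by its orthogonal projection
`PS ≠ 0`), then every coloring of the induced subgraph `Q_{n,m}|_S` (a finite set of codes
of the induced graph whose projections sum to the identity `PS` of `S`) contains a code of
dimension at most `⌈(dim S^⊥ + 1)/m⌉ = ((n - dim S) + 1 + m - 1)/m`. -/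
theorem coloring_of_induced_has_small_code {n m : ℕ} (hn : 1 ≤ n) (hm : 1 ≤ m)
    (Q : Qnm n m) (PS : Matrix (Fin n) (Fin n) ℂ)
    (hPSherm : PS.IsHermitian) (hPSproj : PS * PS = PS) (hPSne : PS ≠ 0)
    (K : Finset (Matrix (Fin n) (Fin n) ℂ))
    (hK : ∀ P ∈ K, P.IsHermitian ∧ P * P = P ∧ P * PS = P ∧ PS * P = P ∧
      ∀ i, ∃ ε : ℝ, P * (PS * Q.A i * PS) * P = (ε : ℂ) • P)
    (hsum : ∑ P ∈ K, P = PS) :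
    ∃ P ∈ K, P.rank ≤ (n - PS.rank + 1 + m - 1) / m :=
  coloring_of_induced_has_small_code_general hm (fun i ↦ ⟨Q.ortho i, Q.eig i⟩)
    (fun i ↦ ⟨Q.pos i, Q.tropical i⟩) Q.wsortho Q.relabel ⟨hPSproj, hPSherm⟩ hPSne
    (fun P hP ↦
      have ⟨hherm, hidem, _, hsub, hε⟩ := hK P hP
      ⟨⟨hidem, hherm⟩, hsub, fun i ↦ have ⟨ε, h⟩ := hε i; ⟨ε, h⟩⟩) hsum
end

section
/- Every quantum graph G admits a coloring of cardinality at most slog(|G|, (‖G‖+1)²), where |G| = dim V(G) and ‖G‖ = dim E(G) − 1. -/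
open Matrix

structure QuantumGraph (n : ℕ) where
  E : Submodule ℝ (Matrix (Fin n) (Fin n) ℂ)
  herm : ∀ A ∈ E, A.IsHermitian
  one_mem : (1 : Matrix (Fin n) (Fin n) ℂ) ∈ E

def IsCodeProj {n : ℕ} (G : QuantumGraph n) (P : Matrix (Fin n) (Fin n) ℂ)
    (ε : Matrix (Fin n) (Fin n) ℂ → ℝ) : Prop :=
  P.IsHermitian ∧ P * P = P ∧ ∀ A ∈ G.E, P * A * P = (ε A : ℂ) • P

def slog (q : ℕ) : ℕ → ℕ
  | 0 => 0
  | p + 1 => slog q (p + 1 - max 1 ((p + 1 + q - 1) / q)) + 1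
decreasing_by
  exact Nat.sub_lt (Nat.succ_pos p) (lt_of_lt_of_le Nat.zero_lt_one (le_max_left _ _))

/-- A coloring of a quantum graph: a finite set of (projections onto) codes summing to
the identity. -/
def IsColoring {n : ℕ} (G : QuantumGraph n) (K : Finset (Matrix (Fin n) (Fin n) ℂ)) :
    Prop :=
  (∀ P ∈ K, ∃ ε, IsCodeProj G P ε) ∧ ∑ P ∈ K, P = 1

/-!
Let `q = (dim E(G))²` and `n = dim V(G)`. It suffices to find a code of dimension `⌈n / q⌉`: the
projection onto it is the first colour, the induced subgraph on its orthogonal complement has an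
edge space of no larger dimension, and iterating uses `slog(n, q)` colours.

To find the code, choose unit vectors greedily, each orthogonal to the images of the earlier ones
under `E(G)`. A dimension count allows at least `n / dim E(G)` of them, and on their span all edge
operators are diagonal. Their diagonal entries form a point configuration in an affine space of
dimension `dim E(G) - 1`, and Tverberg's theorem splits it into `⌈n / q⌉` classes whose convex hulls
share a point. This yields an orthonormal family, one vector for each class, on whose span every
edge operator is scalar.
-/

section Convex

open Set Module

theorem convexHull_range_eq_image_stdSimplex {𝕜 ι F : Type*} [Field 𝕜] [LinearOrder 𝕜]
    [IsStrictOrderedRing 𝕜] [Fintype ι] [AddCommGroup F] [Module 𝕜 F] (g : ι → F) :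
    convexHull 𝕜 (range g) = Fintype.linearCombination 𝕜 g '' stdSimplex 𝕜 ι := by
  classical
  rw [← convexHull_rangle_single_eq_stdSimplex, LinearMap.image_convexHull, ← range_comp]
  congr 2
  ext i
  simp

theorem exists_mem_convexHull_image_compl_singleton {𝕜 ι F : Type*} [Field 𝕜] [LinearOrder 𝕜]
    [IsStrictOrderedRing 𝕜] [Fintype ι] [AddCommGroup F] [Module 𝕜 F] [FiniteDimensional 𝕜 F]
    (hcard : finrank 𝕜 F < Fintype.card ι) {φ : F →ₗ[𝕜] 𝕜} (hφ : φ ≠ 0) {g : ι → F} {z : F}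
    (hz : z ∈ convexHull 𝕜 (range g)) (hle : ∀ i, φ z ≤ φ (g i)) :
    ∃ j, z ∈ convexHull 𝕜 (g '' {j}ᶜ) := by
  obtain ⟨κ, _, p, w, hpg, hp, hw0, hw1, hwz⟩ := eq_pos_convex_span_of_mem_convexHull hz
  choose e he using fun k => hpg (mem_range_self k)
  have hsum : ∑ k, w k * (φ (p k) - φ z) = 0 := by
    simp [mul_sub, Finset.sum_sub_distrib, ← Finset.sum_mul, hw1, ← hwz]
  have hface (k) : φ (p k) = φ z := by
    have := (Finset.sum_eq_zero_iff_of_nonneg fun k _ =>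
      mul_nonneg (hw0 k).le (sub_nonneg.2 (he k ▸ hle (e k)))).1 hsum k (Finset.mem_univ k)
    exact sub_eq_zero.1 ((mul_eq_zero.1 this).resolve_left (hw0 k).ne')
  have hspan : vectorSpan 𝕜 (range p) ≤ LinearMap.ker φ := by
    rw [vectorSpan_def, Submodule.span_le]
    rintro _ ⟨_, ⟨k, rfl⟩, _, ⟨l, rfl⟩, rfl⟩
    simp [hface]
  have hκ : Fintype.card κ < Fintype.card ι := by
    have := hp.card_le_finrank_succ
    have := Submodule.finrank_mono hspan
    have := Dual.finrank_ker_add_one_of_ne_zero hφ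
    omega
  obtain ⟨j, hj⟩ : ∃ j, ∀ k, e k ≠ j := by
    by_contra! hsurj
    exact hκ.not_ge (Fintype.card_le_of_surjective e hsurj)
  exact ⟨j, mem_convexHull_of_exists_fintype w p (fun k => (hw0 k).le) hw1
    (fun k => ⟨e k, hj k, he k⟩) hwz⟩

theorem inner_sub_nonneg_of_forall_dist_le {F : Type*} [NormedAddCommGroup F]
    [InnerProductSpace ℝ F] {K : Set F} (hK : Convex ℝ K) {x z : F} (hz : z ∈ K)
    (hmin : ∀ y ∈ K, dist x z ≤ dist x y) {y : F} (hy : y ∈ K) :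
    0 ≤ inner ℝ (z - x) (y - z) := by
  have : Nonempty K := ⟨⟨z, hz⟩⟩
  have hinf : ‖x - z‖ = ⨅ w : K, ‖x - w‖ := by
    simp only [← dist_eq_norm]
    exact le_antisymm (le_ciInf fun w => hmin w w.2)
      (ciInf_le ⟨0, forall_mem_range.2 fun _ => dist_nonneg⟩ (⟨z, hz⟩ : K))
  rw [← neg_sub x z, inner_neg_left, neg_nonneg]
  exact (norm_eq_iInf_iff_real_inner_le_zero hK hz).1 hinf y hy

/-- Among the finitely many rainbow simplices, take one closest to `x`, with nearest point `z`. If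
`z ≠ x` then some vertex is not needed to span `z`, and exchanging it for a point of its class on
the side of `x` would bring the simplex closer to `x`. -/
theorem exists_mem_convexHull_range_of_finite {ι F : Type*} [Fintype ι] [NormedAddCommGroup F]
    [InnerProductSpace ℝ F] [FiniteDimensional ℝ F] (hcard : finrank ℝ F < Fintype.card ι)
    {s : ι → Set F} (hs : ∀ i, (s i).Finite) {x : F} (hx : ∀ i, x ∈ convexHull ℝ (s i)) :
    ∃ g : ι → F, (∀ i, g i ∈ s i) ∧ x ∈ convexHull ℝ (range g) := by
  classical
  have hne : Nonempty ι := Fintype.card_pos_iff.1 (by omega)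
  obtain ⟨g, hg, hgmin⟩ := exists_min_image (univ.pi s)
    (fun g => Metric.infDist x (convexHull ℝ (range g))) (Finite.pi hs)
    (univ_pi_nonempty_iff.2 fun i => convexHull_nonempty_iff.1 ⟨x, hx i⟩)
  rw [mem_univ_pi] at hg
  obtain ⟨z, hz, hzdist⟩ := ((finite_range g).isCompact_convexHull ℝ).exists_infDist_eq_dist
    (range_nonempty g).convexHull x
  have hnear {g' : ι → F} (hg' : ∀ i, g' i ∈ s i) (hz' : z ∈ convexHull ℝ (range g')) (i : ι) :
      inner ℝ (z - x) z ≤ inner ℝ (z - x) (g' i) := by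
    rw [← sub_nonneg, ← inner_sub_right]
    refine inner_sub_nonneg_of_forall_dist_le (convex_convexHull ℝ _) hz' (fun y hy => ?_)
      (subset_convexHull ℝ _ (mem_range_self i))
    exact hzdist ▸ (hgmin g' (mem_univ_pi.2 hg')).trans (Metric.infDist_le_dist_of_mem hy)
  refine ⟨g, hg, ?_⟩
  by_contra hxg
  have hzx : z - x ≠ 0 := fun h => hxg (sub_eq_zero.1 h ▸ hz)
  obtain ⟨j, hj⟩ := exists_mem_convexHull_image_compl_singleton hcard
    (φ := innerₗ F (z - x)) (fun h => hzx (inner_self_eq_zero.1 (LinearMap.congr_fun h (z - x))))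
    hz (hnear hg hz)
  obtain ⟨a, ha, hax⟩ := ((innerₗ F (z - x)).concaveOn convex_univ).exists_le_of_mem_convexHull
    (subset_univ _) (hx j)
  have hza : inner ℝ (z - x) z ≤ inner ℝ (z - x) a := by
    have hsub : g '' {j}ᶜ ⊆ range (Function.update g j a) := by
      rintro _ ⟨i, hi, rfl⟩
      exact ⟨i, Function.update_of_ne hi _ _⟩
    simpa using hnear (g' := Function.update g j a)
      (fun i => by obtain rfl | hi := eq_or_ne i j <;> simp [*]) (convexHull_mono hsub hj) j
  have hpos : 0 < inner ℝ (z - x) (z - x) := real_inner_self_pos.2 hzx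
  rw [inner_sub_right] at hpos
  exact hpos.not_ge (sub_nonpos.2 (hza.trans hax))

theorem colorful_caratheodory {ι F : Type*} [Fintype ι] [AddCommGroup F] [Module ℝ F]
    [FiniteDimensional ℝ F] (hcard : finrank ℝ F < Fintype.card ι) {s : ι → Set F} {x : F}
    (hx : ∀ i, x ∈ convexHull ℝ (s i)) :
    ∃ g : ι → F, (∀ i, g i ∈ s i) ∧ x ∈ convexHull ℝ (range g) := by
  have hfin (i) : ∃ t : Finset F, ↑t ⊆ s i ∧ x ∈ convexHull ℝ (t : Set F) := by
    simpa [convexHull_eq_union_convexHull_finite_subsets (s i)] using hx i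
  choose t hts hxt using hfin
  let e : F ≃ₗ[ℝ] EuclideanSpace ℝ (Fin (finrank ℝ F)) := LinearEquiv.ofFinrankEq _ _ (by simp)
  obtain ⟨g, hg, hxg⟩ := exists_mem_convexHull_range_of_finite (by simpa using hcard)
    (s := fun i => e '' t i) (fun i => (t i).finite_toSet.image e) (x := e x) fun i => by
      rw [← LinearEquiv.coe_coe, ← LinearMap.image_convexHull]
      exact mem_image_of_mem e (hxt i)
  choose g' hg' hgg' using hg
  refine ⟨g', fun i => hts i (hg' i), ?_⟩
  have hrange : range g = e.toLinearMap '' range g' := by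
    rw [← range_comp]
    exact congrArg range (funext fun i => (hgg' i).symm)
  rw [hrange, ← LinearMap.image_convexHull] at hxg
  exact e.injective.mem_set_image.1 hxg

/-- Sarkaria's argument: for the diagonal `D` of `α → F`, the sum of `w i • Pi.single (c i) (x i)`
lies in `D` exactly when the weighted sums over the classes of `c` agree. -/
theorem exists_partition_sum_smul_eq {ι α F : Type*} [Fintype ι] [Fintype α] [Nonempty α]
    [DecidableEq α] [AddCommGroup F] [Module ℝ F] [FiniteDimensional ℝ F]
    (hcard : (Fintype.card α - 1) * finrank ℝ F < Fintype.card ι) (x : ι → F) :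
    ∃ c : ι → α, ∃ w ∈ stdSimplex ℝ ι, ∃ y, ∀ a, ∑ i with c i = a, w i • x i = y := by
  let D : Submodule ℝ (α → F) := LinearMap.range LinearMap.const
  let f (i : ι) (a : α) : (α → F) ⧸ D := D.mkQ (Pi.single a (x i))
  have hD : finrank ℝ ((α → F) ⧸ D) = (Fintype.card α - 1) * finrank ℝ F := by
    have hconst : finrank ℝ D = finrank ℝ F :=
      LinearMap.finrank_range_of_inj Function.const_injective
    have := D.finrank_quotient_add_finrank
    rw [hconst, finrank_pi_fintype, Finset.sum_const, Finset.card_univ, smul_eq_mul] at this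
    rw [Nat.sub_mul, one_mul, ← this, Nat.add_sub_cancel]
  have hf (i) : 0 ∈ convexHull ℝ (range (f i)) := by
    refine mem_convexHull_of_exists_fintype (fun _ => (Fintype.card α : ℝ)⁻¹) (f i)
      (fun _ => by positivity) (by simp) mem_range_self ?_
    have hdiag : D.mkQ (fun _ => x i) = 0 := (Submodule.Quotient.mk_eq_zero D).2 ⟨x i, rfl⟩
    rw [← Finset.smul_sum, ← map_sum, Finset.univ_sum_single, hdiag, smul_zero]
  obtain ⟨g, hg, h0⟩ := colorful_caratheodory (hD.trans_lt hcard) hf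
  choose c hc using hg
  obtain rfl : (fun i => f i (c i)) = g := funext hc
  rw [convexHull_range_eq_image_stdSimplex] at h0
  obtain ⟨w, hw, hw0⟩ := h0
  obtain ⟨y, hy⟩ : ∑ i, w i • Pi.single (c i) (x i) ∈ D := by
    rw [← Submodule.Quotient.mk_eq_zero D, ← D.mkQ_apply]
    simpa [f, Fintype.linearCombination_apply] using hw0
  refine ⟨c, w, hw, y, fun a => ?_⟩
  have := congrFun hy a
  simpa [Finset.sum_apply, Pi.single_apply, Finset.sum_filter, eq_comm] using this.symm

theorem tverberg_of_map_eq_one {ι α F : Type*} [Fintype ι] [Fintype α] [Nonempty α]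
    [DecidableEq α] [AddCommGroup F] [Module ℝ F] [FiniteDimensional ℝ F]
    (hcard : (Fintype.card α - 1) * finrank ℝ F < Fintype.card ι) {x : ι → F} {φ : F →ₗ[ℝ] ℝ}
    (hφ : ∀ i, φ (x i) = 1) :
    ∃ (c : ι → α) (w : ι → ℝ) (y : F), 0 ≤ w ∧
      ∀ a, ∑ i with c i = a, w i = 1 ∧ ∑ i with c i = a, w i • x i = y := by
  obtain ⟨c, w, hw, y, hy⟩ := exists_partition_sum_smul_eq hcard x
  have hmass (a) : ∑ i with c i = a, w i = φ y := by
    simp [← hy a, hφ]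
  have htotal : Fintype.card α * φ y = 1 := by
    rw [← hw.2, ← Finset.sum_fiberwise _ c]
    simp [hmass]
  refine ⟨c, (Fintype.card α : ℝ) • w, (Fintype.card α : ℝ) • y,
    smul_nonneg (Nat.cast_nonneg _) hw.1, fun a => ⟨?_, ?_⟩⟩
  · simp [← Finset.mul_sum, hmass, htotal]
  · simp [mul_smul, ← Finset.smul_sum, hy]

end Convex

theorem exists_fin_pairwise {α : Type*} {p : α → Prop} {r : α → α → Prop}
    (hr : ∀ ⦃a b⦄, r a b → r b a) (k : ℕ)
    (h : ∀ m < k, ∀ v : Fin m → α, ∃ x, p x ∧ ∀ i, r (v i) x) :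
    ∃ v : Fin k → α, (∀ i, p (v i)) ∧ Pairwise fun i j => r (v i) (v j) := by
  induction k with
  | zero => exact ⟨Fin.elim0, fun i => i.elim0, fun i => i.elim0⟩
  | succ k ih =>
    obtain ⟨v, hv, hvr⟩ := ih fun m hm => h m (hm.trans k.lt_succ_self)
    obtain ⟨x, hx, hxr⟩ := h k k.lt_succ_self v
    refine ⟨Fin.cons x v, Fin.cases hx hv, fun i j => ?_⟩
    induction i using Fin.cases <;> induction j using Fin.cases
    · exact fun h => (h rfl).elim
    · exact fun _ => hr (hxr _)
    · exact fun _ => hxr _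
    · exact fun h => hvr fun hij => h (congrArg Fin.succ hij)

section Isometry

variable {𝕜 ι κ κ' : Type*} [RCLike 𝕜] [Fintype ι]

theorem exists_smul_star_dotProduct_self_eq_one {x : ι → 𝕜} (hx : x ≠ 0) :
    ∃ t : 𝕜, star (t • x) ⬝ᵥ (t • x) = 1 := by
  refine ⟨(‖WithLp.toLp 2 x‖⁻¹ : 𝕜), ?_⟩
  rw [dotProduct_comm, ← EuclideanSpace.inner_toLp_toLp, inner_self_eq_norm_sq_to_K,
    WithLp.toLp_smul, norm_smul_inv_norm (by simpa using hx)]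
  simp

theorem orthonormal_toLp_col_iff [DecidableEq κ] {W : Matrix ι κ 𝕜} :
    Orthonormal 𝕜 (fun k => WithLp.toLp 2 (W.col k)) ↔ Wᴴ * W = 1 := by
  rw [orthonormal_iff_ite, ← Matrix.ext_iff]
  refine forall₂_congr fun k l => ?_
  rw [EuclideanSpace.inner_toLp_toLp, dotProduct_comm, one_apply]
  rfl

theorem exists_isometry_compl [Fintype κ] [Fintype κ'] [DecidableEq ι] [DecidableEq κ]
    [DecidableEq κ'] {W : Matrix ι κ 𝕜} (hW : Wᴴ * W = 1)
    (hcard : Fintype.card κ + Fintype.card κ' = Fintype.card ι) :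
    ∃ U : Matrix ι κ' 𝕜, Uᴴ * U = 1 ∧ Wᴴ * U = 0 ∧ W * Wᴴ + U * Uᴴ = 1 := by
  let v : κ ⊕ κ' → EuclideanSpace 𝕜 ι := Sum.elim (fun k => WithLp.toLp 2 (W.col k)) 0
  have hv : Orthonormal 𝕜 ((Set.range Sum.inl).domRestrict v) := by
    have hcomp := (orthonormal_toLp_col_iff (κ := κ).2 hW).comp _
      (Equiv.ofInjective (Sum.inl (β := κ')) Sum.inl_injective).symm.injective
    convert hcomp using 1
    ext1 ⟨_, k, rfl⟩
    rw [Function.comp_apply, Equiv.ofInjective_symm_apply]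
    rfl
  obtain ⟨b, hb⟩ := hv.exists_orthonormalBasis_extension_of_card_eq (by simp [hcard])
  let U : Matrix ι κ' 𝕜 := of fun i k => b (Sum.inr k) i
  have hcol (k) : WithLp.toLp 2 ((fromCols W U).col k) = b k := by
    rcases k with k | k
    · exact (hb _ ⟨k, rfl⟩).symm
    · rfl
  have hgram : fromRows Wᴴ Uᴴ * fromCols W U = 1 := by
    rw [← conjTranspose_fromCols_eq_fromRows_conjTranspose, ← orthonormal_toLp_col_iff]
    simpa only [hcol] using b.orthonormal
  have hsum : W * Wᴴ + U * Uᴴ = 1 := by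
    have e : ι ≃ κ ⊕ κ' := Fintype.equivOfCardEq (by simp [hcard])
    rw [← fromCols_mul_fromRows, fromCols_mul_fromRows_eq_one_comm e, hgram]
  rw [fromRows_mul_fromCols, ← fromBlocks_one, fromBlocks_inj] at hgram
  exact ⟨U, hgram.2.2.2, hgram.2.1, hsum⟩

theorem conjTranspose_mul_conj_mul [Fintype κ] [DecidableEq κ] {U : Matrix ι κ 𝕜}
    (hU : Uᴴ * U = 1) (P : Matrix κ κ 𝕜) : Uᴴ * (U * P * Uᴴ) * U = P := by
  rw [Matrix.mul_assoc, Matrix.mul_assoc _ Uᴴ, hU, Matrix.mul_one, ← Matrix.mul_assoc, hU,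
    Matrix.one_mul]

theorem mul_mul_conjTranspose_injective [Fintype κ] [DecidableEq κ] {U : Matrix ι κ 𝕜}
    (hU : Uᴴ * U = 1) : Function.Injective fun P : Matrix κ κ 𝕜 => U * P * Uᴴ :=
  Function.LeftInverse.injective (g := fun A => Uᴴ * A * U) (conjTranspose_mul_conj_mul hU)

end Isometry

/-- The matrix whose column `a` is the `√w`-weighted indicator of the class `c ⁻¹' {a}`; it is an
isometry when every class has total weight one. Compression by it averages the entries of a diagonal
matrix over the classes. -/
noncomputable def weightedPartitionMatrix {ι α : Type*} [DecidableEq α] (c : ι → α) (w : ι → ℝ) :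
    Matrix ι α ℂ :=
  of fun i a => if c i = a then (√(w i) : ℂ) else 0

theorem conjTranspose_weightedPartitionMatrix_mul_diagonal_mul {ι α : Type*} [Fintype ι]
    [DecidableEq ι] [DecidableEq α] (c : ι → α) {w : ι → ℝ} (hw : 0 ≤ w) (d : ι → ℂ) :
    (weightedPartitionMatrix c w)ᴴ * diagonal d * weightedPartitionMatrix c w =
      diagonal fun a => ∑ i with c i = a, w i * d i := by
  ext a b
  rw [mul_apply, diagonal_apply]
  simp only [mul_diagonal, conjTranspose_apply, weightedPartitionMatrix, of_apply]
  split_ifs with hab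
  · subst hab
    rw [Finset.sum_filter]
    refine Finset.sum_congr rfl fun i _ => ?_
    split_ifs
    · rw [Complex.star_def, Complex.conj_ofReal, mul_right_comm, ← Complex.ofReal_mul,
        Real.mul_self_sqrt (hw i)]
    · simp
  · refine Finset.sum_eq_zero fun i _ => ?_
    by_cases h : c i = a <;> simp [h, hab]

/-- The compression `A ↦ Uᴴ A U`. It is taken over `ℝ` because the edge spaces of quantum graphs are
real vector spaces; for an isometry `U` it is `P_S A P_S` in the coordinates that `U` gives on its
range `S`. -/
noncomputable def compression {m n : Type*} [Fintype n] (U : Matrix n m ℂ) :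
    Matrix n n ℂ →ₗ[ℝ] Matrix m m ℂ :=
  mulRightLinearMap m ℝ U ∘ₗ mulLeftLinearMap n ℝ Uᴴ

theorem compression_apply {m n : Type*} [Fintype n] (U : Matrix n m ℂ) (A : Matrix n n ℂ) :
    compression U A = Uᴴ * A * U :=
  rfl

namespace QuantumGraph

variable {n m k : ℕ}

/-- The induced subgraph of `G` on the range `S` of an isometry `U`, transported along `U` so that
its vertex space is again a coordinate space. In particular `S` is a code of `G` exactly when `1` is
a code projection of `G.induce U hU`. -/
noncomputable def induce (G : QuantumGraph n) (U : Matrix (Fin n) (Fin m) ℂ) (hU : Uᴴ * U = 1) :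
    QuantumGraph m where
  E := G.E.map (compression U)
  herm := by
    rintro _ ⟨A, hA, rfl⟩
    exact isHermitian_conjTranspose_mul_mul U (G.herm A hA)
  one_mem := ⟨1, G.one_mem, by rw [compression_apply, Matrix.mul_one, hU]⟩

theorem finrank_induce_le (G : QuantumGraph n) (U : Matrix (Fin n) (Fin m) ℂ) (hU : Uᴴ * U = 1) :
    Module.finrank ℝ (G.induce U hU).E ≤ Module.finrank ℝ G.E :=
  Submodule.finrank_map_le _ _

theorem finrank_pos (G : QuantumGraph (n + 1)) : 0 < Module.finrank ℝ G.E := by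
  have : Nontrivial G.E := ⟨⟨1, G.one_mem⟩, 0, fun h => one_ne_zero (congrArg Subtype.val h)⟩
  exact Module.finrank_pos

/-- The analogue of non-adjacency for vectors: `u` is orthogonal to `A v` for every edge operator
`A`. On the span of pairwise unlinked unit vectors the edge operators compress to diagonal
matrices. -/
def IsUnlinked (G : QuantumGraph n) (u v : Fin n → ℂ) : Prop :=
  ∀ A ∈ G.E, star u ⬝ᵥ A *ᵥ v = 0

theorem IsUnlinked.symm {G : QuantumGraph n} {u v : Fin n → ℂ} (h : G.IsUnlinked u v) :
    G.IsUnlinked v u := fun A hA => by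
  rw [star_dotProduct, star_mulVec, (G.herm A hA).eq, ← dotProduct_mulVec, h A hA, star_zero]

theorem exists_isUnlinked (G : QuantumGraph n) (hk : k * Module.finrank ℝ G.E < n)
    (v : Fin k → Fin n → ℂ) : ∃ x, star x ⬝ᵥ x = 1 ∧ ∀ i, G.IsUnlinked (v i) x := by
  let f : (Fin n → ℂ) →ₗ[ℂ] Fin k → G.E →ₗ[ℝ] ℂ := LinearMap.pi fun i =>
    LinearMap.mk₂' ℂ ℝ (fun x A => star (v i) ⬝ᵥ A.1 *ᵥ x) (by simp [mulVec_add])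
      (by simp [mulVec_smul]) (by simp [add_mulVec]) (by simp [smul_mulVec])
  have : Module.Finite ℂ (G.E →ₗ[ℝ] ℂ) := Module.Finite.linearMap ℝ ℂ G.E ℂ
  obtain ⟨x, hx, hx0⟩ := Submodule.exists_mem_ne_zero_of_ne_bot (f.ker_ne_bot_of_finrank_lt (by
    simpa [Module.finrank_pi_fintype, Module.finrank_linearMap ℝ ℂ] using hk))
  obtain ⟨t, ht⟩ := exists_smul_star_dotProduct_self_eq_one hx0
  refine ⟨t • x, ht, fun i A hA => ?_⟩
  have : star (v i) ⬝ᵥ A *ᵥ x = 0 :=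
    LinearMap.congr_fun (congrFun (LinearMap.mem_ker.1 hx) i) ⟨A, hA⟩
  rw [mulVec_smul, dotProduct_smul, this, smul_zero]

theorem exists_isometry_induce_isDiag (G : QuantumGraph n) (hk : k * Module.finrank ℝ G.E < n) :
    ∃ (V : Matrix (Fin n) (Fin (k + 1)) ℂ) (hV : Vᴴ * V = 1),
      ∀ A ∈ (G.induce V hV).E, A.IsDiag := by
  obtain ⟨v, hv1, hv⟩ := exists_fin_pairwise (p := fun x => star x ⬝ᵥ x = 1)
    (r := G.IsUnlinked) (fun _ _ => IsUnlinked.symm) (k + 1) fun m hm => G.exists_isUnlinked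
      ((Nat.mul_le_mul_right _ (Nat.le_of_lt_succ hm)).trans_lt hk)
  let V : Matrix (Fin n) (Fin (k + 1)) ℂ := (of v)ᵀ
  have hentry (A) (i j) : (Vᴴ * A * V) i j = star (v i) ⬝ᵥ A *ᵥ v j := by
    rw [Matrix.mul_assoc]
    rfl
  have hV : Vᴴ * V = 1 := by
    ext i j
    rw [← Matrix.mul_one Vᴴ, hentry, one_apply]
    split_ifs with hij
    · rw [hij, one_mulVec, hv1]
    · exact hv hij 1 G.one_mem
  refine ⟨V, hV, ?_⟩
  rintro _ ⟨A, hA, rfl⟩ i j hij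
  rw [compression_apply, hentry]
  exact hv hij A hA

/-- The diagonal entries `A ↦ A i i` are `n` points of the dual of `E(G)`, all of which take the
value `1` at the identity. The weights of a Tverberg partition of these points give one unit vector
for each class, and the common Tverberg point is `ε`. -/
theorem exists_isometry_isCodeProj_one_of_isDiag (G : QuantumGraph n) (hG : ∀ A ∈ G.E, A.IsDiag)
    (hm : m * Module.finrank ℝ G.E < n) :
    ∃ (T : Matrix (Fin n) (Fin (m + 1)) ℂ) (hT : Tᴴ * T = 1) (ε : _),
      IsCodeProj (G.induce T hT) 1 ε := by
  let x (i : Fin n) : Module.Dual ℝ G.E :=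
    Complex.reLm ∘ₗ entryLinearMap ℝ ℂ i i ∘ₗ G.E.subtype
  obtain ⟨c, w, y, hw, hc⟩ := tverberg_of_map_eq_one (α := Fin (m + 1)) (x := x)
    (φ := Module.Dual.eval ℝ G.E ⟨1, G.one_mem⟩)
    (by simpa [Subspace.dual_finrank_eq] using hm) (by simp [x])
  let T := weightedPartitionMatrix c w
  have hdiag (A : G.E) : A.1 = diagonal fun i => (x i A : ℂ) := by
    rw [← (hG A A.2).diagonal_diag]
    exact congrArg diagonal (G.herm A A.2).coe_re_diag.symm
  have hcompress (A : G.E) : Tᴴ * A.1 * T = (y A : ℂ) • 1 := by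
    rw [hdiag, conjTranspose_weightedPartitionMatrix_mul_diagonal_mul c hw, smul_one_eq_diagonal]
    congr 1
    ext1 a
    rw [← (hc a).2]
    simp
  have hT : Tᴴ * T = 1 := by
    rw [← Matrix.mul_one Tᴴ, ← diagonal_one,
      conjTranspose_weightedPartitionMatrix_mul_diagonal_mul c hw]
    congr 1
    ext1 a
    simp only [mul_one, ← Complex.ofReal_sum, (hc a).1, Complex.ofReal_one]
  refine ⟨T, hT, fun B => (B 0 0).re, isHermitian_one, Matrix.one_mul 1, ?_⟩
  rintro _ ⟨A, hA, rfl⟩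
  rw [compression_apply, hcompress ⟨A, hA⟩]
  simp

theorem induce_induce (G : QuantumGraph n) (U : Matrix (Fin n) (Fin m) ℂ) (hU : Uᴴ * U = 1)
    (T : Matrix (Fin m) (Fin k) ℂ) (hT : Tᴴ * T = 1) (hUT : (U * T)ᴴ * (U * T) = 1) :
    (G.induce U hU).induce T hT = G.induce (U * T) hUT := by
  have : compression T ∘ₗ compression U = compression (U * T) := by
    ext1 A
    simp [compression_apply, Matrix.mul_assoc]
  simp only [induce, ← Submodule.map_comp, this]

theorem exists_isometry_isCodeProj_one (G : QuantumGraph n)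
    (hm : m * Module.finrank ℝ G.E ^ 2 < n) :
    ∃ (W : Matrix (Fin n) (Fin (m + 1)) ℂ) (hW : Wᴴ * W = 1) (ε : _),
      IsCodeProj (G.induce W hW) 1 ε := by
  obtain ⟨V, hV, hdiag⟩ := G.exists_isometry_induce_isDiag (k := m * Module.finrank ℝ G.E)
    (by rwa [mul_assoc, ← sq])
  obtain ⟨T, hT, ε, hε⟩ := (G.induce V hV).exists_isometry_isCodeProj_one_of_isDiag hdiag
    (Nat.lt_succ_of_le (Nat.mul_le_mul_left m (G.finrank_induce_le V hV)))
  have hVT : (V * T)ᴴ * (V * T) = 1 := by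
    rw [conjTranspose_mul, Matrix.mul_assoc, ← Matrix.mul_assoc Vᴴ, hV, Matrix.one_mul, hT]
  exact ⟨V * T, hVT, ε, G.induce_induce V hV T hT hVT ▸ hε⟩

end QuantumGraph

section Coloring

variable {n m k : ℕ} {G : QuantumGraph n}

theorem IsCodeProj.of_induce {U : Matrix (Fin n) (Fin m) ℂ} {hU : Uᴴ * U = 1}
    {P : Matrix (Fin m) (Fin m) ℂ} {ε : Matrix (Fin m) (Fin m) ℂ → ℝ}
    (h : IsCodeProj (G.induce U hU) P ε) :
    IsCodeProj G (U * P * Uᴴ) fun A => ε (compression U A) := by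
  obtain ⟨hP, hP2, hcode⟩ := h
  refine ⟨isHermitian_mul_mul_conjTranspose U hP, ?_, fun A hA => ?_⟩
  · calc U * P * Uᴴ * (U * P * Uᴴ) = U * P * (Uᴴ * U) * P * Uᴴ := by simp only [Matrix.mul_assoc]
      _ = U * P * Uᴴ := by rw [hU, Matrix.mul_one, Matrix.mul_assoc U, hP2]
  · calc U * P * Uᴴ * A * (U * P * Uᴴ) = U * (P * compression U A * P) * Uᴴ := by
          simp only [compression_apply, Matrix.mul_assoc]
      _ = (ε (compression U A) : ℂ) • (U * P * Uᴴ) := by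
          rw [hcode _ (Submodule.mem_map_of_mem hA), Matrix.mul_smul, Matrix.smul_mul]

theorem IsCodeProj.isColoring_singleton_one {ε : Matrix (Fin n) (Fin n) ℂ → ℝ}
    (h : IsCodeProj G 1 ε) : IsColoring G {1} :=
  ⟨by simpa using ⟨ε, h⟩, by simp⟩

theorem IsColoring.sum_image {U : Matrix (Fin n) (Fin m) ℂ} {hU : Uᴴ * U = 1}
    {K : Finset (Matrix (Fin m) (Fin m) ℂ)} (hK : IsColoring (G.induce U hU) K) :
    ∑ P ∈ K.image (U * · * Uᴴ), P = U * Uᴴ := by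
  rw [Finset.sum_image (mul_mul_conjTranspose_injective hU).injOn, ← Matrix.sum_mul,
    ← Matrix.mul_sum, hK.2, Matrix.mul_one]

theorem IsColoring.image_union_image {W : Matrix (Fin n) (Fin k) ℂ} {hW : Wᴴ * W = 1}
    {U : Matrix (Fin n) (Fin m) ℂ} {hU : Uᴴ * U = 1} (hWU : Wᴴ * U = 0)
    (hsum : W * Wᴴ + U * Uᴴ = 1) {K : Finset (Matrix (Fin k) (Fin k) ℂ)}
    {L : Finset (Matrix (Fin m) (Fin m) ℂ)} (hK : IsColoring (G.induce W hW) K)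
    (hL : IsColoring (G.induce U hU) L) :
    IsColoring G (K.image (W * · * Wᴴ) ∪ L.image (U * · * Uᴴ)) := by
  have hinter : ∀ P ∈ K.image (W * · * Wᴴ) ∩ L.image (U * · * Uᴴ), P = 0 := by
    simp only [Finset.mem_inter, Finset.mem_image]
    rintro _ ⟨⟨Q, -, rfl⟩, R, -, hR⟩
    rw [← conjTranspose_mul_conj_mul hW Q, ← hR]
    simp only [← Matrix.mul_assoc, hWU, Matrix.zero_mul, Matrix.mul_zero]
  constructor
  · simp only [Finset.forall_mem_union, Finset.forall_mem_image]
    exact ⟨fun P hP => (hK.1 P hP).imp' _ fun _ => IsCodeProj.of_induce,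
      fun P hP => (hL.1 P hP).imp' _ fun _ => IsCodeProj.of_induce⟩
  · rw [← add_zero (Finset.sum _ _), ← Finset.sum_eq_zero hinter, Finset.sum_union_inter,
      hK.sum_image, hL.sum_image, hsum]

end Coloring

/-- Here `p / q + 1` is `⌈(p + 1) / q⌉`. -/
theorem slog_succ {q : ℕ} (hq : 0 < q) (p : ℕ) : slog q (p + 1) = slog q (p - p / q) + 1 := by
  rw [slog]
  congr 2
  have : (p + 1 + q - 1) / q = p / q + 1 := by
    rw [Nat.add_right_comm, Nat.add_sub_cancel, Nat.add_div_right _ hq]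
  rw [this, max_eq_right (Nat.le_add_left 1 _), Nat.add_sub_add_right]

theorem QuantumGraph.exists_coloring_card_le_slog_of_finrank_sq_le {q n : ℕ} (G : QuantumGraph n)
    (hq : Module.finrank ℝ G.E ^ 2 ≤ q) :
    ∃ K : Finset (Matrix (Fin n) (Fin n) ℂ), IsColoring G K ∧ K.card ≤ slog q n := by
  induction n using Nat.strong_induction_on with
  | _ n ih =>
  rcases n with _ | p
  · exact ⟨∅, ⟨by simp, Subsingleton.elim _ _⟩, by simp⟩
  obtain ⟨W, hW, ε, hε⟩ := G.exists_isometry_isCodeProj_one (m := p / q)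
    (Nat.lt_succ_of_le ((Nat.mul_le_mul_left _ hq).trans (Nat.div_mul_le_self p q)))
  obtain ⟨U, hU, hWU, hsum⟩ := exists_isometry_compl (κ' := Fin (p - p / q)) hW (by
    have := Nat.div_le_self p q
    simp only [Fintype.card_fin]
    omega)
  obtain ⟨L, hL, hLcard⟩ := ih _ (Nat.lt_succ_of_le (Nat.sub_le p _)) (G.induce U hU)
    ((Nat.pow_le_pow_left (G.finrank_induce_le U hU) 2).trans hq)
  refine ⟨_, hε.isColoring_singleton_one.image_union_image hWU hsum hL, ?_⟩
  rw [slog_succ ((pow_pos G.finrank_pos 2).trans_le hq), add_comm (slog _ _)]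
  exact (Finset.card_union_le _ _).trans
    (add_le_add Finset.card_image_le (Finset.card_image_le.trans hLcard))

/-- Every quantum graph `G` admits a coloring of cardinality at most
`slog(|G|, (‖G‖+1)²)`, where `‖G‖ = dim E(G) − 1`. -/
theorem exists_coloring_card_le_slog {n : ℕ} (hn : 0 < n) (G : QuantumGraph n) :
    ∃ K : Finset (Matrix (Fin n) (Fin n) ℂ),
      IsColoring G K ∧ K.card ≤ slog ((Module.finrank ℝ G.E - 1 + 1) ^ 2) n :=
  G.exists_coloring_card_le_slog_of_finrank_sq_le (Nat.pow_le_pow_left le_tsub_add 2)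
end
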